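/- Let P ⊂ ℝ^d (d ≥ 3) be a centrally symmetric convex polytope with nonempty interior and let λ ∈ ℝ. Then A(P,z) = λ for every nonzero z ∈ ℝ^d if and only if P is a zonotope with a generator set V of pairwise linearly independent nonzero vectors such that, for every v ∈ V, the number of edges of P parallel to v equals λ. -/

import Mathlib

open scoped Pointwise BigOperators

noncomputable section

/-- Scalar product on `ℝ^d`. -/
def dotp {d : ℕ} (z x : Fin d → ℝ) : ℝ := ∑ i, z i * x i

/-- Number of vertices (extreme points) of a set. -/
def nVert {d : ℕ} (S : Set (Fin d → ℝ)) : ℕ := (Set.extremePoints ℝ S).ncard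

/-- `t⁻ = min {z·x : x ∈ P}`. -/
def tMin {d : ℕ} (P : Set (Fin d → ℝ)) (z : Fin d → ℝ) : ℝ := sInf (dotp z '' P)

/-- `t⁺ = max {z·x : x ∈ P}`. -/
def tMax {d : ℕ} (P : Set (Fin d → ℝ)) (z : Fin d → ℝ) : ℝ := sSup (dotp z '' P)

/-- `A(P,z)`: the average number of vertices of the sections `P ∩ {x : z·x = t}`
over `t ∈ [t⁻, t⁺]`. -/
def avgVert {d : ℕ} (P : Set (Fin d → ℝ)) (z : Fin d → ℝ) : ℝ :=
  (tMax P z - tMin P z)⁻¹ *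
    ∫ t in tMin P z..tMax P z, ((nVert (P ∩ {x | dotp z x = t}) : ℝ))

/-- A convex polytope: the convex hull of a finite point set. -/
def IsPolytope {d : ℕ} (P : Set (Fin d → ℝ)) : Prop :=
  ∃ s : Finset (Fin d → ℝ), P = convexHull ℝ (s : Set (Fin d → ℝ))

/-- The vectors are nonzero and pairwise linearly independent. -/
def PairwiseIndep {d n : ℕ} (a : Fin n → (Fin d → ℝ)) : Prop :=
  (∀ i, a i ≠ 0) ∧ ∀ i j, i ≠ j → ∀ c : ℝ, a j ≠ c • a i

/-- A zonotope: a translate of a Minkowski sum of segments `[0, aᵢ]` with pairwise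
linearly independent nonzero generators. -/
def IsZonotope {d : ℕ} (P : Set (Fin d → ℝ)) : Prop :=
  ∃ (n : ℕ) (a : Fin n → (Fin d → ℝ)) (x : Fin d → ℝ),
    PairwiseIndep a ∧ P = {x} + ∑ i, segment ℝ 0 (a i)

/-- Central symmetry: there is `c` with `2c - P = P`. -/
def CentSymm {d : ℕ} (P : Set (Fin d → ℝ)) : Prop :=
  ∃ c : Fin d → ℝ, (fun y => (2 : ℝ) • c - y) '' P = P

/-- An edge of the hypergraph `ℱ` on the generator set `V`: a subset `W ⊆ V` spanning
a 2-dimensional subspace, maximal with this property. -/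
def IsHEdge (V W : Finset (Fin 3 → ℝ)) : Prop :=
  W ⊆ V ∧ Module.finrank ℝ (Submodule.span ℝ (W : Set (Fin 3 → ℝ))) = 2 ∧
    ∀ v ∈ V, v ∉ W →
      Module.finrank ℝ (Submodule.span ℝ (insert v (W : Set (Fin 3 → ℝ)))) = 3

/-- The degree of `v` in the hypergraph `ℱ` on `V`: the number of edges containing `v`. -/
def degF (V : Finset (Fin 3 → ℝ)) (v : Fin 3 → ℝ) : ℕ :=
  {W : Finset (Fin 3 → ℝ) | IsHEdge V W ∧ v ∈ W}.ncard

/-- The set of edges of the polytope `P` that are parallel to `v`: one-dimensional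
exposed faces `[u,w]` of `P` with `w - u` a nonzero multiple of `v`. -/
def edgesParallel {d : ℕ} (P : Set (Fin d → ℝ)) (v : Fin d → ℝ) : Set (Set (Fin d → ℝ)) :=
  {e | ∃ u w : Fin d → ℝ, u ≠ w ∧ e = segment ℝ u w ∧
    (∃ y : Fin d → ℝ, y ≠ 0 ∧ e = {x ∈ P | ∀ p ∈ P, dotp y p ≤ dotp y x}) ∧
    ∃ c : ℝ, c ≠ 0 ∧ w - u = c • v}

/-!
For all but finitely many `t`, the vertices of the section `P ∩ {x | z·x = t}` are the points where
the hyperplane crosses the edges of `P`. Integrating over `t`, the condition `A(P, z) = λ` says that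
`λ` times the width of `P` in direction `z` equals `∑ |z·(w - u)|` over all edges `[u, w]` of `P`.

If `P` is a zonotope, then its edges are translates of its generators `aᵢ`, and its width is
`∑ |z·aᵢ|`. So the condition compares two combinations of the functions `z ↦ |z·aᵢ|`, which are
linearly independent, because `|z·aᵢ|` is the only one that fails to be differentiable at a generic
point of the hyperplane `z·aᵢ = 0`.

Conversely, the condition expresses the width of `P` as the width of a zonotope whose generators are
parallel to the edges of `P`. A centrally symmetric convex body is determined by its center and its
width, so `P` is itself such a zonotope.
-/

open Set Filter Topology MeasureTheory

section Segments

variable {E : Type*} [AddCommGroup E] [Module ℝ E] {u w x y : E}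

lemma left_mem_extremePoints_segment (u w : E) : u ∈ (segment ℝ u w).extremePoints ℝ := by
  rcases eq_or_ne u w with rfl | huw
  · simp
  have hsdiff : segment ℝ u w \ {u} = AffineMap.lineMap u w '' Ioc (0 : ℝ) 1 := by
    rw [← Icc_sdiff_left, image_sdiff (AffineMap.lineMap_injective ℝ huw),
      ← segment_eq_image_lineMap, image_singleton, AffineMap.lineMap_apply_zero]
  rw [(convex_segment u w).mem_extremePoints_iff_convex_sdiff, hsdiff]
  exact ⟨left_mem_segment ℝ u w, (convex_Ioc 0 1).affine_image _⟩

lemma right_mem_extremePoints_segment (u w : E) : w ∈ (segment ℝ u w).extremePoints ℝ :=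
  segment_symm ℝ u w ▸ left_mem_extremePoints_segment w u

lemma sub_mem_span_of_mem_segment (hx : x ∈ segment ℝ u w) (hy : y ∈ segment ℝ u w) :
    y - x ∈ Submodule.span ℝ {w - u} := by
  rw [segment_eq_image'] at hx hy
  obtain ⟨r, -, rfl⟩ := hx
  obtain ⟨s, -, rfl⟩ := hy
  exact Submodule.mem_span_singleton.mpr ⟨s - r, by module⟩

lemma injOn_segment {F G : Type*} [AddCommGroup F] [Module ℝ F] [FunLike G E F]
    [LinearMapClass G ℝ E F] (f : G) (h : f u ≠ f w) :
    InjOn f (segment ℝ u w) := by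
  intro x hx y hy hxy
  obtain ⟨r, hr⟩ := Submodule.mem_span_singleton.mp (sub_mem_span_of_mem_segment hx hy)
  have hf : r • (f w - f u) = 0 := by rw [← map_sub, ← map_smul, hr, map_sub, hxy, sub_self]
  have hr0 : r = 0 := (smul_eq_zero.mp hf).resolve_right (sub_ne_zero.mpr h.symm)
  rwa [hr0, zero_smul, eq_comm, sub_eq_zero, eq_comm] at hr

lemma image_segment_eq_uIcc {G : Type*} [FunLike G E ℝ] [LinearMapClass G ℝ E ℝ] (f : G)
    (u w : E) : f '' segment ℝ u w = uIcc (f u) (f w) :=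
  (image_segment ℝ (f : E →ₗ[ℝ] ℝ).toAffineMap u w).trans (segment_eq_uIcc _ _)

end Segments

lemma map_eq_zero_of_forall_lt_map {E : Type*} [AddCommGroup E] [Module ℝ E] {f : E →ₗ[ℝ] ℝ}
    {D : Submodule ℝ E} {c : ℝ} (h : ∀ v ∈ D, c < f v) {v : E} (hv : v ∈ D) : f v = 0 := by
  by_contra hfv
  have hlt := h _ (D.smul_mem (c / f v) hv)
  rw [map_smul, smul_eq_mul, div_mul_cancel₀ c hfv] at hlt
  exact hlt.false

section FaceDirections

variable {E : Type*} [AddCommGroup E] [Module ℝ E] {P : Set E} {p x y v : E}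

/-- The directions along which one can move both ways from the point `p` inside the convex set `P`,
that is, the direction space of the smallest face of `P` containing `p`. -/
def faceDirection (hP : Convex ℝ P) (hp : p ∈ P) : Submodule ℝ E where
  carrier := {v | ∀ᶠ r in 𝓝 (0 : ℝ), p + r • v ∈ P}
  zero_mem' := by simp [hp]
  add_mem' {v w} hv hw := by
    have htwo : Tendsto (fun r : ℝ => 2 * r) (𝓝 0) (𝓝 0) :=
      (continuous_const_mul 2).tendsto' 0 0 (mul_zero 2)
    filter_upwards [htwo.eventually hv, htwo.eventually hw] with r hrv hrw
    convert hP.midpoint_mem hrv hrw using 1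
    rw [midpoint_eq_smul_add, invOf_eq_inv]
    module
  smul_mem' c v hv := by
    have hc : Tendsto (fun r : ℝ => r * c) (𝓝 0) (𝓝 0) :=
      (continuous_mul_const c).tendsto' 0 0 (zero_mul c)
    simpa only [mem_ofPred_eq, smul_smul] using hc.eventually hv

/-- The smallest face of the convex set `P` containing the point `p`. -/
def minimalFace (hP : Convex ℝ P) (hp : p ∈ P) : Set E :=
  {x ∈ P | x - p ∈ faceDirection hP hp}

variable {hP : Convex ℝ P} {hp : p ∈ P}

lemma mem_faceDirection : v ∈ faceDirection hP hp ↔ ∀ᶠ r in 𝓝 (0 : ℝ), p + r • v ∈ P := Iff.rfl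

lemma sub_mem_faceDirection_iff (hx : x ∈ P) :
    x - p ∈ faceDirection hP hp ↔ ∃ r > (0 : ℝ), p + r • (p - x) ∈ P := by
  constructor
  · intro h
    rw [← neg_mem_iff, neg_sub] at h
    exact (mem_faceDirection.mp h).exists_gt
  · rintro ⟨r, hr, hrP⟩
    have hconv : Convex ℝ (AffineMap.lineMap (k := ℝ) p x ⁻¹' P) := hP.affine_preimage _
    have hneg : AffineMap.lineMap p x (-r) ∈ P := by
      convert hrP using 1
      rw [AffineMap.lineMap_apply_module']
      module
    have hIcc : Icc (-r) 1 ⊆ AffineMap.lineMap (k := ℝ) p x ⁻¹' P :=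
      hconv.ordConnected.out hneg (by simpa using hx)
    filter_upwards [Icc_mem_nhds (neg_lt_zero.mpr hr) one_pos] with s hs
    simpa only [mem_preimage, AffineMap.lineMap_apply_module', add_comm] using hIcc hs

lemma sub_mem_faceDirection_of_mem_openSegment (hx : x ∈ P) (hy : y ∈ P)
    (h : p ∈ openSegment ℝ x y) : x - p ∈ faceDirection hP hp := by
  obtain ⟨a, b, ha, hb, hab, rfl⟩ := h
  refine (sub_mem_faceDirection_iff hx).mpr ⟨a / b, div_pos ha hb, ?_⟩
  convert hy using 1
  obtain rfl : a = 1 - b := by linarith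
  match_scalars <;> field_simp <;> ring

lemma mem_minimalFace_self : p ∈ minimalFace hP hp := ⟨hp, by simp⟩

lemma isExtreme_minimalFace : IsExtreme ℝ P (minimalFace hP hp) := by
  refine ⟨fun x hx => hx.1, ?_⟩
  rintro x hx y hy _ ⟨hqP, hq⟩ ⟨a, b, ha, hb, hab, rfl⟩
  obtain ⟨r, hr, hrP⟩ := (sub_mem_faceDirection_iff hqP).mp hq
  refine ⟨hx, (sub_mem_faceDirection_iff hx).mpr ⟨r * a / (1 + r * b), by positivity, ?_⟩⟩
  have h := hP hy hrP (a := r * b / (1 + r * b)) (b := 1 / (1 + r * b)) (by positivity)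
    (by positivity) (by field_simp; ring)
  convert h using 1
  obtain rfl : b = 1 - a := by linarith
  match_scalars <;> field_simp <;> ring

lemma minimalFace_subset_of_isExtreme {A : Set E} (hA : IsExtreme ℝ P A) (hpA : p ∈ A) :
    minimalFace hP hp ⊆ A := by
  rintro x ⟨hxP, hx⟩
  obtain ⟨r, hr, hrP⟩ := (sub_mem_faceDirection_iff hxP).mp hx
  refine hA.2 hxP hrP hpA ⟨r / (1 + r), 1 / (1 + r), by positivity, by positivity, ?_, ?_⟩
  · field_simp
    ring
  · match_scalars <;> field_simp
    ring

lemma minimalFace_eq_segment {u w : E} (he : IsExtreme ℝ P (segment ℝ u w))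
    (hpe : p ∈ openSegment ℝ u w) : minimalFace hP hp = segment ℝ u w := by
  have hpe' := openSegment_subset_segment ℝ u w hpe
  refine (minimalFace_subset_of_isExtreme he hpe').antisymm fun x hx => ⟨he.1 hx, ?_⟩
  have hu := sub_mem_faceDirection_of_mem_openSegment (hP := hP) (hp := hp)
    (he.1 (left_mem_segment ℝ u w)) (he.1 (right_mem_segment ℝ u w)) hpe
  have hw := sub_mem_faceDirection_of_mem_openSegment (hP := hP) (hp := hp)
    (he.1 (right_mem_segment ℝ u w)) (he.1 (left_mem_segment ℝ u w)) (openSegment_symm ℝ u w ▸ hpe)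
  have hwu : w - u ∈ faceDirection hP hp := by simpa using sub_mem hw hu
  exact (Submodule.span_singleton_le_iff_mem _ _).mpr hwu (sub_mem_span_of_mem_segment hpe' hx)

lemma mem_extremePoints_of_faceDirection_eq_bot (h : faceDirection hP hp = ⊥) :
    p ∈ P.extremePoints ℝ := by
  refine ⟨hp, fun x hx y hy hpxy => ?_⟩
  have hxp := sub_mem_faceDirection_of_mem_openSegment (hP := hP) (hp := hp) hx hy hpxy
  rwa [h, Submodule.mem_bot, sub_eq_zero] at hxp

lemma disjoint_faceDirection_ker {F : Type*} [AddCommGroup F] [Module ℝ F] (f : E →ₗ[ℝ] F) {c : F}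
    (hpc : p ∈ (P ∩ {x | f x = c}).extremePoints ℝ) :
    Disjoint (faceDirection hP hp) (LinearMap.ker f) := by
  rw [Submodule.disjoint_def]
  intro v hv hfv
  have hv' := mem_faceDirection.mp (neg_mem hv)
  obtain ⟨r, hr, hrv, hrv'⟩ := ((mem_faceDirection.mp hv).and hv').exists_gt
  have hsec : ∀ {x}, x ∈ LinearMap.ker f → p + x ∈ P → p + x ∈ P ∩ {x | f x = c} := by
    intro x hx hxP
    exact ⟨hxP, by rw [mem_ofPred_eq, map_add, LinearMap.mem_ker.mp hx, add_zero, hpc.1.2]⟩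
  have hpv := hpc.2 (hsec (Submodule.smul_mem _ r hfv) hrv)
    (hsec (Submodule.smul_mem _ r (neg_mem hfv)) hrv')
    ⟨1 / 2, 1 / 2, by norm_num, by norm_num, by norm_num, by module⟩
  exact (smul_eq_zero.mp (add_eq_left.mp hpv)).resolve_left hr.ne'

lemma faceDirection_convexHull_le_span {s : Set E} (hp : p ∈ convexHull ℝ s) :
    faceDirection (convex_convexHull ℝ s) hp ≤ Submodule.span ℝ s := by
  intro v hv
  obtain ⟨r, hr, hrv⟩ := (mem_faceDirection.mp hv).exists_gt
  have hsub : convexHull ℝ s ⊆ Submodule.span ℝ s :=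
    convexHull_min Submodule.subset_span (Submodule.convex _)
  have hrv' := sub_mem (hsub hrv) (hsub hp)
  rw [add_sub_cancel_left] at hrv'
  exact (Submodule.smul_mem_iff _ hr.ne').mp hrv'

end FaceDirections

section Edges

variable {E : Type*} [AddCommGroup E] [Module ℝ E] [TopologicalSpace E] {s P e : Set E} {p v : E}
  {l : E →L[ℝ] ℝ} {t : ℝ}

/-- The edges of `P`, that is, its one-dimensional exposed faces. -/
def edges (P : Set E) : Set (Set E) :=
  {e | IsExposed ℝ P e ∧ ∃ u w, u ≠ w ∧ e = segment ℝ u w}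

/-- The edges of `P` that are parallel to the vector `v`. -/
def parallelEdges (P : Set E) (v : E) : Set (Set E) :=
  {e ∈ edges P | ∃ u w, e = segment ℝ u w ∧ w - u ∈ Submodule.span ℝ {v}}

lemma exists_endpoints_of_mem_edges_convexHull (he : e ∈ edges (convexHull ℝ s)) :
    ∃ u ∈ s, ∃ w ∈ s, u ≠ w ∧ e = segment ℝ u w := by
  obtain ⟨hexp, u, w, huw, rfl⟩ := he
  have hsub : (segment ℝ u w).extremePoints ℝ ⊆ s :=
    hexp.isExtreme.extremePoints_subset_extremePoints.trans extremePoints_convexHull_subset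
  exact ⟨u, hsub (left_mem_extremePoints_segment u w), w,
    hsub (right_mem_extremePoints_segment u w), huw, rfl⟩

lemma finite_edges_convexHull (hs : s.Finite) : (edges (convexHull ℝ s)).Finite := by
  refine (hs.image2 (segment ℝ) hs).subset fun e he => ?_
  obtain ⟨u, hu, w, hw, -, rfl⟩ := exists_endpoints_of_mem_edges_convexHull he
  exact mem_image2_of_mem hu hw

lemma injOn_of_mem_edges_convexHull (he : e ∈ edges (convexHull ℝ s)) (hte : t ∈ l '' e)
    (ht : t ∉ l '' s) : InjOn l e := by
  obtain ⟨u, hu, w, -, -, rfl⟩ := exists_endpoints_of_mem_edges_convexHull he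
  refine injOn_segment l fun huw => ht ⟨u, hu, ?_⟩
  obtain ⟨p, hp, rfl⟩ := hte
  obtain ⟨r, hr⟩ := Submodule.mem_span_singleton.mp
    (sub_mem_span_of_mem_segment (left_mem_segment ℝ u w) hp)
  have hlr := congrArg l hr
  simp only [map_smul, map_sub] at hlr
  rw [huw, sub_self, smul_zero, eq_comm, sub_eq_zero] at hlr
  rw [hlr, huw]

lemma mem_extremePoints_section_of_mem_edges (he : e ∈ edges (convexHull ℝ s)) (hp : p ∈ e)
    (ht : l p ∉ l '' s) : p ∈ (convexHull ℝ s ∩ {x | l x = l p}).extremePoints ℝ := by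
  refine ⟨⟨he.1.subset hp, rfl⟩, fun x hx y hy hpxy => ?_⟩
  have hxe := he.1.isExtreme.2 hx.1 hy.1 hp hpxy
  exact injOn_of_mem_edges_convexHull he (mem_image_of_mem l hp) ht hxe hp hx.2

lemma minimalFace_eq_of_mem_edges (he : e ∈ edges (convexHull ℝ s)) (hp : p ∈ e) (hps : p ∉ s) :
    minimalFace (convex_convexHull ℝ s) (he.1.subset hp) = e := by
  obtain ⟨u, hu, w, hw, -, rfl⟩ := exists_endpoints_of_mem_edges_convexHull he
  refine minimalFace_eq_segment he.1.isExtreme (mem_openSegment_of_ne_left_right ?_ ?_ hp)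
  · rintro rfl
    exact hps hu
  · rintro rfl
    exact hps hw

variable [IsTopologicalAddGroup E] [ContinuousSMul ℝ E] [T2Space E] [LocallyConvexSpace ℝ E]

lemma exists_eq_segment_of_sub_mem_span (hP : Convex ℝ P) (hPc : IsCompact P) (hne : P.Nonempty)
    (hv : ∀ x ∈ P, ∀ y ∈ P, y - x ∈ Submodule.span ℝ {v}) : ∃ u w, P = segment ℝ u w := by
  rcases eq_or_ne v 0 with rfl | hv0
  · obtain ⟨x, hx⟩ := hne
    refine ⟨x, x, ?_⟩
    rw [segment_same]
    refine (Set.Nonempty.subset_singleton_iff ⟨x, hx⟩).mp fun y hy => ?_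
    simpa [sub_eq_zero] using hv x hx y hy
  obtain ⟨f, hf⟩ := geometric_hahn_banach_point_point hv0
  have hfv : f v ≠ 0 := by simpa using hf.ne
  obtain ⟨u, hu, hmin⟩ := hPc.exists_isMinOn hne f.continuous.continuousOn
  obtain ⟨w, hw, hmax⟩ := hPc.exists_isMaxOn hne f.continuous.continuousOn
  refine ⟨u, w, Subset.antisymm (fun x hx => ?_) (hP.segment_subset hu hw)⟩
  have hfx : f x ∈ f '' segment ℝ u w := by
    rw [image_segment_eq_uIcc]
    exact Icc_subset_uIcc ⟨hmin hx, hmax hx⟩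
  obtain ⟨y, hy, hyx⟩ := hfx
  obtain ⟨r, hr⟩ := Submodule.mem_span_singleton.mp (hv x hx y (hP.segment_subset hu hw hy))
  have hr0 : r = 0 := by
    have h := congrArg f hr
    rw [map_smul, map_sub, hyx, sub_self] at h
    exact (smul_eq_zero.mp h).resolve_right hfv
  rw [hr0, zero_smul, eq_comm, sub_eq_zero] at hr
  exact hr ▸ hy

lemma convexHull_inter_of_isExposed {F : Set E} (hs : s.Finite)
    (hF : IsExposed ℝ (convexHull ℝ s) F) : convexHull ℝ (F ∩ s) = F := by
  have hFc : IsCompact F := hF.isCompact (hs.isCompact_convexHull ℝ)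
  have hFconv : Convex ℝ F := hF.convex (convex_convexHull ℝ s)
  refine (convexHull_min inter_subset_left hFconv).antisymm ?_
  have hext : F.extremePoints ℝ ⊆ F ∩ s := fun x hx =>
    ⟨hx.1, extremePoints_convexHull_subset (hF.isExtreme.extremePoints_subset_extremePoints hx)⟩
  calc F = closure (convexHull ℝ (F.extremePoints ℝ)) :=
        (closure_convexHull_extremePoints hFc hFconv).symm
    _ ⊆ convexHull ℝ (F ∩ s) := closure_minimal (convexHull_mono hext)
        ((hs.subset inter_subset_right).isCompact_convexHull ℝ).isClosed

lemma exists_lt_of_sub_notMem_faceDirection (hs : s.Finite) (hp : p ∈ convexHull ℝ s) :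
    ∃ f : E →L[ℝ] ℝ, (∀ v ∈ faceDirection (convex_convexHull ℝ s) hp, f v = 0) ∧
      ∀ x ∈ s, x - p ∉ faceDirection (convex_convexHull ℝ s) hp → f x < f p := by
  have hP := convex_convexHull ℝ s
  set D := faceDirection hP hp
  have : FiniteDimensional ℝ D :=
    have := FiniteDimensional.span_of_finite ℝ hs
    Submodule.finiteDimensional_of_le (faceDirection_convexHull_le_span hp)
  have hMclosed : IsClosed (AffineSubspace.mk' p D : Set E) :=
    D.closed_of_finiteDimensional.preimage (continuous_sub_right p)
  set s' := {x ∈ s | x - p ∉ D}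
  have hs' : convexHull ℝ s' ⊆ convexHull ℝ s \ minimalFace hP hp :=
    convexHull_min (fun x hx => ⟨subset_convexHull ℝ s hx.1, fun h => hx.2 h.2⟩)
      (isExtreme_minimalFace.convex_sdiff hP)
  have hdisj : Disjoint (convexHull ℝ s') (AffineSubspace.mk' p D) :=
    Set.disjoint_left.mpr fun x hx hxM => (hs' hx).2 ⟨(hs' hx).1, hxM⟩
  obtain ⟨f, c, c', hc, hcc', hc'⟩ := geometric_hahn_banach_compact_closed
    (convex_convexHull ℝ s') ((hs.subset (sep_subset _ _)).isCompact_convexHull ℝ)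
    (AffineSubspace.mk' p D).convex hMclosed hdisj
  refine ⟨f, fun v hv => ?_, fun x hx hxD => ?_⟩
  · refine map_eq_zero_of_forall_lt_map (f := (f : E →ₗ[ℝ] ℝ)) (c := c' - f p) (fun w hw => ?_) hv
    have hlt := hc' (w + p) (by simpa using hw)
    rw [map_add] at hlt
    exact sub_lt_iff_lt_add.mpr hlt
  · exact (hc x (subset_convexHull ℝ s' ⟨hx, hxD⟩)).trans
      (hcc'.trans (hc' p (AffineSubspace.self_mem_mk' p D)))

lemma isExposed_minimalFace (hs : s.Finite) (hp : p ∈ convexHull ℝ s) :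
    IsExposed ℝ (convexHull ℝ s) (minimalFace (convex_convexHull ℝ s) hp) := by
  obtain ⟨f, hfD, hfs⟩ := exists_lt_of_sub_notMem_faceDirection hs hp
  set D := faceDirection (convex_convexHull ℝ s) hp
  have hle : convexHull ℝ s ⊆ {x | f x ≤ f p} := by
    refine convexHull_min (fun x hx => ?_) (convex_halfSpace_le f.isLinear _)
    by_cases hxD : x - p ∈ D
    · simpa [sub_eq_zero] using (hfD _ hxD).le
    · exact (hfs x hx hxD).le
  suffices minimalFace (convex_convexHull ℝ s) hp = f.toExposed (convexHull ℝ s) from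
    this ▸ ContinuousLinearMap.toExposed.isExposed
  refine Subset.antisymm (fun x hx => ⟨hx.1, fun y hy => (hle hy).trans ?_⟩) ?_
  · simpa [sub_eq_zero] using (hfD _ hx.2).ge
  · intro x hx
    refine ⟨hx.1, ?_⟩
    rw [← convexHull_inter_of_isExposed hs ContinuousLinearMap.toExposed.isExposed] at hx
    refine convexHull_min (t := AffineSubspace.mk' p D) (fun y hy => ?_)
      (AffineSubspace.convex _) hx
    by_contra hyD
    exact (hfs y hy.2 hyD).not_ge (hy.1.2 p hp)

lemma minimalFace_mem_edges (hs : s.Finite)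
    (hp : p ∈ (convexHull ℝ s ∩ {x | l x = t}).extremePoints ℝ) (ht : t ∉ l '' s) :
    minimalFace (convex_convexHull ℝ s) hp.1.1 ∈ edges (convexHull ℝ s) := by
  have hexp := isExposed_minimalFace hs hp.1.1
  have hker := disjoint_faceDirection_ker (hP := convex_convexHull ℝ s) (hp := hp.1.1)
    (l : E →ₗ[ℝ] ℝ) hp
  obtain ⟨v, hv, hv0⟩ : ∃ v ∈ faceDirection (convex_convexHull ℝ s) hp.1.1, v ≠ 0 := by
    refine Submodule.exists_mem_ne_zero_of_ne_bot fun hbot => ht ⟨p, ?_, hp.1.2⟩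
    exact extremePoints_convexHull_subset (mem_extremePoints_of_faceDirection_eq_bot hbot)
  have hlv : l v ≠ 0 := fun h => hv0 (Submodule.disjoint_def.mp hker v hv h)
  have hline : ∀ x ∈ minimalFace (convex_convexHull ℝ s) hp.1.1,
      ∀ y ∈ minimalFace (convex_convexHull ℝ s) hp.1.1, y - x ∈ Submodule.span ℝ {v} := by
    intro x hx y hy
    have hyx : y - x ∈ faceDirection (convex_convexHull ℝ s) hp.1.1 := by
      simpa using sub_mem hy.2 hx.2
    have h0 : y - x - (l (y - x) / l v) • v = 0 := by
      refine Submodule.disjoint_def.mp hker _ (sub_mem hyx (Submodule.smul_mem _ _ hv)) ?_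
      simp [hlv]
    exact Submodule.mem_span_singleton.mpr ⟨_, (sub_eq_zero.mp h0).symm⟩
  obtain ⟨u, w, huw⟩ := exists_eq_segment_of_sub_mem_span
    (hexp.convex (convex_convexHull ℝ s)) (hexp.isCompact (hs.isCompact_convexHull ℝ))
    ⟨p, mem_minimalFace_self⟩ hline
  refine ⟨hexp, u, w, ?_, huw⟩
  rintro rfl
  obtain ⟨r, hr, hrv⟩ := (mem_faceDirection.mp hv).exists_gt
  have hmem : p + r • v ∈ minimalFace (convex_convexHull ℝ s) hp.1.1 :=
    ⟨hrv, by simpa using Submodule.smul_mem _ r hv⟩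
  have hpu := mem_minimalFace_self (hP := convex_convexHull ℝ s) (hp := hp.1.1)
  rw [huw, segment_same, mem_singleton_iff] at hmem hpu
  rw [hpu, add_eq_left, smul_eq_zero] at hmem
  exact hmem.elim hr.ne' hv0

lemma ncard_extremePoints_section (hs : s.Finite) (ht : t ∉ l '' s) :
    ((convexHull ℝ s ∩ {x | l x = t}).extremePoints ℝ).ncard =
      {e ∈ edges (convexHull ℝ s) | t ∈ l '' e}.ncard := by
  refine ncard_congr (fun p hp => minimalFace (convex_convexHull ℝ s) hp.1.1) ?_ ?_ ?_
  · exact fun p hp => ⟨minimalFace_mem_edges hs hp ht, p, mem_minimalFace_self, hp.1.2⟩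
  · intro p q hp hq hpq
    refine injOn_of_mem_edges_convexHull (minimalFace_mem_edges hs hp ht)
      ⟨p, mem_minimalFace_self, hp.1.2⟩ ht mem_minimalFace_self ?_ (hp.1.2.trans hq.1.2.symm)
    exact hpq ▸ mem_minimalFace_self
  · rintro e ⟨he, p, hp, rfl⟩
    exact ⟨p, mem_extremePoints_section_of_mem_edges he hp ht,
      minimalFace_eq_of_mem_edges he hp fun hps => ht (mem_image_of_mem l hps)⟩

end Edges

section FinsetSums

variable {ι E : Type*} [AddCommMonoid E] (t : Finset ι) {A : ι → Set E}

lemma finite_finsetSum (hA : ∀ i ∈ t, (A i).Finite) : (∑ i ∈ t, A i).Finite :=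
  Finset.sum_induction A Set.Finite (fun _ _ => Set.Finite.add) (finite_singleton 0) hA

lemma nonempty_finsetSum (hA : ∀ i ∈ t, (A i).Nonempty) : (∑ i ∈ t, A i).Nonempty :=
  Finset.sum_induction A Set.Nonempty (fun _ _ => Set.Nonempty.add) (singleton_nonempty 0) hA

lemma subset_finsetSum_of_zero_mem {t : Finset ι} {i : ι} (hi : i ∈ t)
    (hA : ∀ j ∈ t, (0 : E) ∈ A j) : A i ⊆ ∑ j ∈ t, A j := by
  classical
  rw [← Finset.add_sum_erase t A hi]
  refine subset_add_left _ ?_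
  simpa using finsetSum_mem_finsetSum (t.erase i) A (fun _ => 0)
    fun j hj => hA j (Finset.mem_of_mem_erase hj)

lemma isCompact_finsetSum [TopologicalSpace E] [ContinuousAdd E] (hA : ∀ i ∈ t, IsCompact (A i)) :
    IsCompact (∑ i ∈ t, A i) :=
  Finset.sum_induction A IsCompact (fun _ _ => IsCompact.add) isCompact_singleton hA

end FinsetSums

section Width

variable {E : Type*} [AddCommGroup E] [Module ℝ E] [TopologicalSpace E]

/-- The width of `A` in the direction of the linear functional `l`. -/
def width (l : E →L[ℝ] ℝ) (A : Set E) : ℝ :=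
  sSup (l '' A) - sInf (l '' A)

lemma width_segment (l : E →L[ℝ] ℝ) (u w : E) : width l (segment ℝ u w) = |l (w - u)| := by
  rw [width, image_segment_eq_uIcc, uIcc,
    csSup_Icc inf_le_sup, csInf_Icc inf_le_sup, map_sub]
  exact sup_sub_inf_eq_abs_sub _ _

lemma width_zero (A : Set E) : width (0 : E →L[ℝ] ℝ) A = 0 := by
  rcases A.eq_empty_or_nonempty with rfl | hA
  · simp [width]
  · simp [width, hA.image_const]

lemma width_singleton (l : E →L[ℝ] ℝ) (x : E) : width l {x} = 0 := by simp [width]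

lemma width_nonneg {A : Set E} (hA : IsCompact A) (l : E →L[ℝ] ℝ) : 0 ≤ width l A := by
  have h := hA.image l.continuous
  exact sub_nonneg.mpr (Real.sInf_le_sSup _ h.bddBelow h.bddAbove)

lemma abs_sub_le_width {A : Set E} (hA : IsCompact A) {x y : E} (hx : x ∈ A) (hy : y ∈ A)
    (l : E →L[ℝ] ℝ) : |l x - l y| ≤ width l A := by
  have hc := hA.image l.continuous
  have hsub := subset_Icc_csInf_csSup hc.bddBelow hc.bddAbove
  exact Real.dist_le_of_mem_Icc (hsub (mem_image_of_mem l hx)) (hsub (mem_image_of_mem l hy))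

lemma width_add {A B : Set E} (hA : IsCompact A) (hB : IsCompact B) (hA' : A.Nonempty)
    (hB' : B.Nonempty) (l : E →L[ℝ] ℝ) : width l (A + B) = width l A + width l B := by
  have hA'' := hA.image l.continuous
  have hB'' := hB.image l.continuous
  simp only [width, Set.image_add]
  rw [csSup_add (hA'.image l) hA''.bddAbove (hB'.image l) hB''.bddAbove,
    csInf_add (hA'.image l) hA''.bddBelow (hB'.image l) hB''.bddBelow]
  ring

variable [ContinuousAdd E]

lemma width_finsetSum {ι : Type*} (t : Finset ι) {A : ι → Set E} (hA : ∀ i ∈ t, IsCompact (A i))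
    (hA' : ∀ i ∈ t, (A i).Nonempty) (l : E →L[ℝ] ℝ) :
    width l (∑ i ∈ t, A i) = ∑ i ∈ t, width l (A i) := by
  induction t using Finset.cons_induction with
  | empty => exact width_singleton l 0
  | cons i t hi ih =>
    simp only [Finset.forall_mem_cons] at hA hA'
    rw [Finset.sum_cons, Finset.sum_cons, width_add hA.1 (isCompact_finsetSum t hA.2) hA'.1
      (nonempty_finsetSum t hA'.2), ih hA.2 hA'.2]

end Width

section EdgeFormula

variable {E : Type*} [AddCommGroup E] [Module ℝ E] [TopologicalSpace E] {s e : Set E}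
  {l : E →L[ℝ] ℝ}

lemma measurableSet_image_of_mem_edges (he : e ∈ edges s) : MeasurableSet (l '' e) := by
  obtain ⟨-, u, w, -, rfl⟩ := he
  rw [image_segment_eq_uIcc]
  exact measurableSet_uIcc

variable [IsTopologicalAddGroup E] [ContinuousSMul ℝ E]

lemma setIntegral_indicator_image_of_mem_edges (hs : s.Finite) (he : e ∈ edges (convexHull ℝ s)) :
    ∫ t in Icc (sInf (l '' convexHull ℝ s)) (sSup (l '' convexHull ℝ s)),
      (l '' e).indicator 1 t = width l e := by
  have hc := (hs.isCompact_convexHull ℝ).image l.continuous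
  have hsub : l '' e ⊆ Icc (sInf (l '' convexHull ℝ s)) (sSup (l '' convexHull ℝ s)) :=
    (image_mono he.1.subset).trans (subset_Icc_csInf_csSup hc.bddBelow hc.bddAbove)
  rw [setIntegral_indicator (measurableSet_image_of_mem_edges he), inter_eq_right.mpr hsub]
  obtain ⟨-, u, w, -, rfl⟩ := he
  rw [width_segment, image_segment_eq_uIcc]
  simp [abs_sub_comm]

variable [T2Space E] [LocallyConvexSpace ℝ E]

lemma ncard_extremePoints_section_eq_sum_indicator {t : ℝ} (hs : s.Finite) (ht : t ∉ l '' s) :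
    (((convexHull ℝ s ∩ {x | l x = t}).extremePoints ℝ).ncard : ℝ) =
      ∑ e ∈ (finite_edges_convexHull hs).toFinset, (l '' e).indicator 1 t := by
  classical
  have hfilter : {e ∈ edges (convexHull ℝ s) | t ∈ l '' e} =
      ({e ∈ (finite_edges_convexHull hs).toFinset | t ∈ l '' e} : Finset (Set E)) := by
    ext e
    simp
  rw [ncard_extremePoints_section hs ht, hfilter, ncard_coe_finset, Finset.card_filter]
  push_cast
  rfl

/-- Apart from finitely many values of `t`, the vertices of the section `l = t` are the points
where this hyperplane crosses an edge. -/
lemma intervalIntegral_ncard_extremePoints_section (hs : s.Finite) :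
    ∫ t in sInf (l '' convexHull ℝ s)..sSup (l '' convexHull ℝ s),
      (((convexHull ℝ s ∩ {x | l x = t}).extremePoints ℝ).ncard : ℝ) =
      ∑ᶠ e ∈ edges (convexHull ℝ s), width l e := by
  have hfin := finite_edges_convexHull hs
  have hc := (hs.isCompact_convexHull ℝ).image l.continuous
  have hae : ∀ᵐ t : ℝ, t ∉ l '' s :=
    measure_eq_zero_iff_ae_notMem.mp ((hs.image l).measure_zero volume)
  rw [intervalIntegral.integral_of_le (Real.sInf_le_sSup _ hc.bddBelow hc.bddAbove),
    ← integral_Icc_eq_integral_Ioc, setIntegral_congr_ae measurableSet_Icc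
      (hae.mono fun t ht _ => ncard_extremePoints_section_eq_sum_indicator hs ht),
    integral_finsetSum, finsum_mem_eq_finite_toFinset_sum _ hfin]
  · exact Finset.sum_congr rfl fun e he =>
      setIntegral_indicator_image_of_mem_edges hs (hfin.mem_toFinset.mp he)
  · intro e he
    exact (integrable_const (1 : ℝ)).indicator
      (measurableSet_image_of_mem_edges (hfin.mem_toFinset.mp he))

lemma exists_mem_edges_width_pos (hs : s.Finite) (hl : 0 < width l (convexHull ℝ s)) :
    ∃ e ∈ edges (convexHull ℝ s), 0 < width l e := by
  have hP := hs.isCompact_convexHull ℝ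
  have hc := hP.image l.continuous
  have hconv : Convex ℝ (l '' convexHull ℝ s) :=
    (convex_convexHull ℝ s).linear_image (l : E →ₗ[ℝ] ℝ)
  have hne : (l '' convexHull ℝ s).Nonempty := by
    by_contra hempty
    simp [width, not_nonempty_iff_eq_empty.mp hempty] at hl
  have hinf : (l '' convexHull ℝ s).Infinite :=
    (Icc_infinite (sub_pos.mp hl)).mono
      (hconv.ordConnected.out (hc.sInf_mem hne) (hc.sSup_mem hne))
  obtain ⟨_, ⟨x, hx, rfl⟩, hxs⟩ := hinf.exists_notMem_finite (hs.image l)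
  have hsec : IsCompact (convexHull ℝ s ∩ {y | l y = l x}) :=
    hP.inter_right (isClosed_eq l.continuous continuous_const)
  obtain ⟨p, hp⟩ := hsec.extremePoints_nonempty ⟨x, hx, rfl⟩
  have he := minimalFace_mem_edges hs hp hxs
  have hinj := injOn_of_mem_edges_convexHull he ⟨p, mem_minimalFace_self, hp.1.2⟩ hxs
  refine ⟨_, he, ?_⟩
  obtain ⟨-, u, w, huw, heq⟩ := he
  rw [heq] at hinj ⊢
  rw [width_segment, map_sub, abs_pos, sub_ne_zero]
  exact fun h => huw (hinj (left_mem_segment ℝ u w) (right_mem_segment ℝ u w) h.symm)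

end EdgeFormula

section Zonotopes

variable {E : Type*} [AddCommGroup E] [Module ℝ E]

/-- The zonotope with base point `x` and generators `a i`, a translate of a sum of segments. -/
def zonotope {ι : Type*} [Fintype ι] (x : E) (a : ι → E) : Set E :=
  {x} + ∑ i, segment ℝ 0 (a i)

lemma singleton_sub_segment (a : E) : {a} - segment ℝ 0 a = segment ℝ 0 a := by
  rw [singleton_sub]
  calc (a - ·) '' segment ℝ 0 a = (AffineMap.const ℝ E a - AffineMap.id ℝ E) '' segment ℝ 0 a := rfl
    _ = segment ℝ 0 a := by
      rw [image_segment, segment_symm]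
      simp

lemma singleton_add_segment_zero (q v : E) : {q} + segment ℝ 0 v = segment ℝ q (q + v) := by
  rw [singleton_add, segment_translate_image, add_zero]

lemma mem_span_sub_of_segment_subset {q v u w : E} (h : segment ℝ q (q + v) ⊆ segment ℝ u w) :
    v ∈ Submodule.span ℝ {w - u} := by
  simpa using sub_mem_span_of_mem_segment (h (left_mem_segment ℝ q _)) (h (right_mem_segment ℝ q _))

variable {ι : Type*} [Fintype ι] {x : E} {a : ι → E}

lemma singleton_sub_zonotope (x : E) (a : ι → E) :
    {x + x + ∑ i, a i} - zonotope x a = zonotope x a := by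
  have hsum : ({∑ i, a i} : Set E) - ∑ i, segment ℝ 0 (a i) = ∑ i, segment ℝ 0 (a i) := by
    rw [← Set.finsetSum_singleton, ← Finset.sum_sub_distrib]
    exact Finset.sum_congr rfl fun i _ => singleton_sub_segment (a i)
  rw [zonotope, ← singleton_add_singleton, add_sub_add_comm, hsum, singleton_sub_singleton,
    add_sub_cancel_right]

lemma zonotope_eq_convexHull (x : E) (a : ι → E) :
    zonotope x a = convexHull ℝ ({x} + ∑ i, {0, a i}) := by
  rw [zonotope, convexHull_add, convexHull_singleton, ← parallelepiped_eq_sum_segment,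
    parallelepiped_eq_convexHull]

lemma nonempty_zonotope (x : E) (a : ι → E) : (zonotope x a).Nonempty :=
  (singleton_nonempty x).add <|
    nonempty_finsetSum _ fun i _ => ⟨0, left_mem_segment ℝ 0 (a i)⟩

lemma convex_zonotope (x : E) (a : ι → E) : Convex ℝ (zonotope x a) :=
  zonotope_eq_convexHull x a ▸ convex_convexHull ℝ _

variable [TopologicalSpace E]

lemma toExposed_add (l : E →L[ℝ] ℝ) (A B : Set E) :
    l.toExposed (A + B) = l.toExposed A + l.toExposed B := by
  ext z
  constructor
  · rintro ⟨⟨p, hp, q, hq, rfl⟩, hmax⟩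
    refine add_mem_add ⟨hp, fun p' hp' => ?_⟩ ⟨hq, fun q' hq' => ?_⟩
    · simpa using hmax _ (add_mem_add hp' hq)
    · simpa using hmax _ (add_mem_add hp hq')
  · rintro ⟨p, ⟨hp, hpmax⟩, q, ⟨hq, hqmax⟩, rfl⟩
    refine ⟨add_mem_add hp hq, ?_⟩
    rintro _ ⟨p', hp', q', hq', rfl⟩
    simpa using add_le_add (hpmax p' hp') (hqmax q' hq')

lemma toExposed_singleton (l : E →L[ℝ] ℝ) (x : E) : l.toExposed {x} = {x} := by
  ext y
  simp +contextual [ContinuousLinearMap.toExposed]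

lemma toExposed_sum (l : E →L[ℝ] ℝ) (A : ι → Set E) :
    l.toExposed (∑ i, A i) = ∑ i, l.toExposed (A i) :=
  map_sum (⟨⟨l.toExposed, toExposed_singleton l 0⟩, toExposed_add l⟩ : Set E →+ Set E) A Finset.univ

lemma toExposed_segment_of_eq {l : E →L[ℝ] ℝ} {u w : E} (h : l u = l w) :
    l.toExposed (segment ℝ u w) = segment ℝ u w := by
  have hconst : ∀ z ∈ segment ℝ u w, l z = l w := fun z hz => by
    have hmem := mem_image_of_mem l hz
    rwa [image_segment_eq_uIcc, h, uIcc_self] at hmem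
  exact Subset.antisymm (fun z hz => hz.1) fun z hz =>
    ⟨hz, fun y hy => (hconst y hy).le.trans (hconst z hz).ge⟩

lemma toExposed_segment_of_lt {l : E →L[ℝ] ℝ} {u w : E} (h : l u < l w) :
    l.toExposed (segment ℝ u w) = {w} := by
  have hle : ∀ z ∈ segment ℝ u w, l z ≤ l w := fun z hz => by
    have hmem := mem_image_of_mem l hz
    rw [image_segment_eq_uIcc, uIcc_of_le h.le] at hmem
    exact hmem.2
  refine Subset.antisymm (fun z hz => ?_) ?_
  · exact injOn_segment l h.ne hz.1 (right_mem_segment ℝ u w)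
      ((hle z hz.1).antisymm (hz.2 w (right_mem_segment ℝ u w)))
  · exact singleton_subset_iff.mpr ⟨right_mem_segment ℝ u w, hle⟩

lemma exists_toExposed_zonotope (l : E →L[ℝ] ℝ) (x : E) (a : ι → E) :
    ∃ q, l.toExposed (zonotope x a) = {q} + ∑ i with l (a i) = 0, segment ℝ 0 (a i) := by
  have hseg : ∀ i, l (a i) ≠ 0 → ∃ p, l.toExposed (segment ℝ 0 (a i)) = {p} := by
    intro i hi
    rcases hi.lt_or_gt with h | h
    · exact ⟨0, segment_symm ℝ 0 (a i) ▸ toExposed_segment_of_lt (by simpa using h)⟩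
    · exact ⟨a i, toExposed_segment_of_lt (by simpa using h)⟩
  choose! p hp using hseg
  refine ⟨x + ∑ i with l (a i) ≠ 0, p i, ?_⟩
  rw [zonotope, toExposed_add, toExposed_singleton, toExposed_sum,
    ← Finset.sum_filter_not_add_sum_filter _ (fun i => l (a i) = 0), ← add_assoc,
    ← singleton_add_singleton, ← Set.finsetSum_singleton]
  refine congrArg₂ (fun A B : Set E => {x} + A + B) (Finset.sum_congr rfl fun i hi => ?_)
    (Finset.sum_congr rfl fun i hi => ?_)
  · exact hp i (Finset.mem_filter.mp hi).2
  · exact toExposed_segment_of_eq (by rw [map_zero, (Finset.mem_filter.mp hi).2])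

section Edges

variable {e : Set E}

lemma exists_eq_segment_of_mem_edges_zonotope (h0 : ∀ i, a i ≠ 0)
    (hind : Pairwise fun i j => a j ∉ Submodule.span ℝ {a i}) (he : e ∈ edges (zonotope x a)) :
    ∃ i q, e = segment ℝ q (q + a i) := by
  obtain ⟨hexp, u, w, huw, rfl⟩ := he
  obtain ⟨l, hl : _ = l.toExposed _⟩ := hexp ⟨u, left_mem_segment ℝ u w⟩
  obtain ⟨q, hq⟩ := exists_toExposed_zonotope l x a
  rw [hq] at hl
  set J := Finset.univ.filter fun i => l (a i) = 0
  have hspan : ∀ i ∈ J, a i ∈ Submodule.span ℝ {w - u} := fun i hi => by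
    refine mem_span_sub_of_segment_subset (q := q) ?_
    rw [← singleton_add_segment_zero, hl]
    exact add_subset_add_left
      (subset_finsetSum_of_zero_mem hi fun j _ => left_mem_segment ℝ 0 (a j))
  have hsub : ∀ i ∈ J, ∀ j ∈ J, i = j := fun i hi j hj => by
    by_contra hij
    refine hind hij ?_
    obtain ⟨c, hc⟩ := Submodule.mem_span_singleton.mp (hspan i hi)
    have hc0 : c ≠ 0 := by
      rintro rfl
      exact h0 i (by rw [← hc, zero_smul])
    rw [← hc, Submodule.span_singleton_smul_eq hc0.isUnit]
    exact hspan j hj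
  obtain ⟨i, hi⟩ : J.Nonempty := by
    by_contra! hJ
    rw [hJ, Finset.sum_empty, add_zero] at hl
    exact huw ((hl ▸ left_mem_segment ℝ u w : u ∈ ({q} : Set E)).trans
      (hl ▸ right_mem_segment ℝ u w : w ∈ ({q} : Set E)).symm)
  refine ⟨i, q, ?_⟩
  rw [hl, Finset.eq_singleton_iff_unique_mem.mpr ⟨hi, fun j hj => hsub j hj i hi⟩,
    Finset.sum_singleton, singleton_add_segment_zero]

lemma mem_parallelEdges_zonotope_iff (h0 : ∀ i, a i ≠ 0)
    (hind : Pairwise fun i j => a j ∉ Submodule.span ℝ {a i}) {i : ι} :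
    e ∈ parallelEdges (zonotope x a) (a i) ↔
      e ∈ edges (zonotope x a) ∧ ∃ q, e = segment ℝ q (q + a i) := by
  constructor
  · rintro ⟨he, u, w, hew, hwu⟩
    obtain ⟨j, q, hq⟩ := exists_eq_segment_of_mem_edges_zonotope h0 hind he
    have hji : a j ∈ Submodule.span ℝ {a i} :=
      (Submodule.span_singleton_le_iff_mem _ _).mpr hwu
        (mem_span_sub_of_segment_subset (hq.symm.trans hew).subset)
    obtain rfl : i = j := by_contra fun hij => hind hij hji
    exact ⟨he, q, hq⟩
  · rintro ⟨he, q, rfl⟩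
    exact ⟨he, q, _, rfl, by simp⟩

lemma edges_zonotope_eq_iUnion (h0 : ∀ i, a i ≠ 0)
    (hind : Pairwise fun i j => a j ∉ Submodule.span ℝ {a i}) :
    edges (zonotope x a) = ⋃ i, parallelEdges (zonotope x a) (a i) := by
  refine Subset.antisymm (fun e he => ?_) (iUnion_subset fun i e he => he.1)
  obtain ⟨i, q, hq⟩ := exists_eq_segment_of_mem_edges_zonotope h0 hind he
  exact mem_iUnion.mpr ⟨i, (mem_parallelEdges_zonotope_iff h0 hind).mpr ⟨he, q, hq⟩⟩

lemma pairwise_disjoint_parallelEdges_zonotope (h0 : ∀ i, a i ≠ 0)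
    (hind : Pairwise fun i j => a j ∉ Submodule.span ℝ {a i}) :
    Pairwise (Function.onFun Disjoint fun i => parallelEdges (zonotope x a) (a i)) := by
  refine fun i j hij => Set.disjoint_left.mpr fun e hi hj => hind hij ?_
  obtain ⟨-, q, rfl⟩ := (mem_parallelEdges_zonotope_iff h0 hind).mp hj
  obtain ⟨-, u, w, huw, hwu⟩ := hi
  exact (Submodule.span_singleton_le_iff_mem _ _).mpr hwu
    (mem_span_sub_of_segment_subset huw.subset)

lemma finite_edges_zonotope (x : E) (a : ι → E) : (edges (zonotope x a)).Finite := by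
  rw [zonotope_eq_convexHull]
  exact finite_edges_convexHull <| (finite_singleton x).add <|
    finite_finsetSum _ fun i _ => (finite_singleton (a i)).insert 0

lemma finsum_width_edges_zonotope (h0 : ∀ i, a i ≠ 0)
    (hind : Pairwise fun i j => a j ∉ Submodule.span ℝ {a i}) (l : E →L[ℝ] ℝ) :
    ∑ᶠ e ∈ edges (zonotope x a), width l e =
      ∑ i, ((parallelEdges (zonotope x a) (a i)).ncard : ℝ) * |l (a i)| := by
  have hfin : ∀ i, (parallelEdges (zonotope x a) (a i)).Finite := fun i =>
    (finite_edges_zonotope x a).subset (sep_subset _ _)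
  have hwidth : ∀ i, ∀ e ∈ parallelEdges (zonotope x a) (a i), width l e = |l (a i)| := by
    intro i e he
    obtain ⟨-, q, rfl⟩ := (mem_parallelEdges_zonotope_iff h0 hind).mp he
    rw [width_segment, add_sub_cancel_left]
  rw [edges_zonotope_eq_iUnion h0 hind,
    finsum_mem_iUnion (pairwise_disjoint_parallelEdges_zonotope h0 hind) hfin,
    finsum_eq_sum_of_fintype]
  refine Finset.sum_congr rfl fun i _ => ?_
  rw [finsum_mem_congr rfl (hwidth i), finsum_mem_eq_finite_toFinset_sum _ (hfin i),
    Finset.sum_const, ncard_eq_toFinset_card _ (hfin i), nsmul_eq_mul]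

end Edges

variable [IsTopologicalAddGroup E] [ContinuousSMul ℝ E]

lemma isCompact_segment (u w : E) : IsCompact (segment ℝ u w) := by
  rw [← convexHull_pair]
  exact ((finite_singleton w).insert u).isCompact_convexHull ℝ

lemma isCompact_zonotope (x : E) (a : ι → E) : IsCompact (zonotope x a) :=
  isCompact_singleton.add <| isCompact_finsetSum _ fun i _ => isCompact_segment 0 (a i)

lemma width_zonotope (l : E →L[ℝ] ℝ) (x : E) (a : ι → E) :
    width l (zonotope x a) = ∑ i, |l (a i)| := by
  have hc : ∀ i ∈ Finset.univ, IsCompact (segment ℝ 0 (a i)) := fun i _ =>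
    isCompact_segment 0 (a i)
  have hne : ∀ i ∈ Finset.univ, (segment ℝ 0 (a i)).Nonempty := fun i _ =>
    ⟨0, left_mem_segment ℝ 0 (a i)⟩
  rw [zonotope, width_add isCompact_singleton (isCompact_finsetSum _ hc) (singleton_nonempty x)
    (nonempty_finsetSum _ hne), width_singleton, zero_add, width_finsetSum _ hc hne]
  simp [width_segment]

end Zonotopes

section AbsIndependence

variable {E : Type*} [AddCommGroup E] [Module ℝ E] [TopologicalSpace E] [SeparatingDual ℝ E]
  {ι : Type*} {a : ι → E}

lemma exists_apply_eq_zero_and_apply_ne_zero {v w : E} (h : w ∉ Submodule.span ℝ {v}) :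
    ∃ l : E →L[ℝ] ℝ, l v = 0 ∧ l w ≠ 0 := by
  rcases eq_or_ne v 0 with rfl | hv
  · obtain ⟨l, hl⟩ := SeparatingDual.exists_ne_zero (R := ℝ) (x := w) fun hw => h (by simp [hw])
    exact ⟨l, map_zero l, hl⟩
  obtain ⟨f, hf⟩ := SeparatingDual.exists_eq_one (R := ℝ) hv
  obtain ⟨g, hg⟩ := SeparatingDual.exists_ne_zero (R := ℝ) (x := w - f w • v) fun hw =>
    h (Submodule.mem_span_singleton.mpr ⟨f w, (sub_eq_zero.mp hw).symm⟩)
  exact ⟨g - g v • f, by simp [hf], by simpa [mul_comm] using hg⟩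

lemma exists_apply_eq_zero_and_forall_apply_ne_zero [Finite ι] {v : E}
    (h : ∀ i, a i ∉ Submodule.span ℝ {v}) : ∃ l : E →L[ℝ] ℝ, l v = 0 ∧ ∀ i, l (a i) ≠ 0 := by
  let ev : E →ₗ[ℝ] Module.Dual ℝ (E →L[ℝ] ℝ) := (topDualPairing ℝ E).flip
  exact Module.Dual.exists_forall_mem_ne_zero_of_forall_exists (LinearMap.ker (ev v))
    (fun i => ev (a i)) fun i => exists_apply_eq_zero_and_apply_ne_zero (h i)

/-- On a line crossing the hyperplane `l (a k) = 0` away from all the other hyperplanes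
`l (a j) = 0`, only the `k`-th function fails to be differentiable. -/
lemma linearIndependent_abs_apply [Finite ι] (h0 : ∀ i, a i ≠ 0)
    (hind : Pairwise fun i j => a j ∉ Submodule.span ℝ {a i}) :
    LinearIndependent ℝ fun i (l : E →L[ℝ] ℝ) => |l (a i)| := by
  classical
  have := Fintype.ofFinite ι
  refine Fintype.linearIndependent_iff.mpr fun α hα k => ?_
  obtain ⟨l, hlk, hl⟩ := exists_apply_eq_zero_and_forall_apply_ne_zero
    (a := fun j : {j // j ≠ k} => a j) (v := a k) fun j => hind j.2.symm
  obtain ⟨m, hm⟩ := SeparatingDual.exists_eq_one (R := ℝ) (h0 k)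
  have hrest : DifferentiableAt ℝ
      (fun r : ℝ => -∑ j ∈ Finset.univ.erase k, α j * |l (a j) + r * m (a j)|) 0 := by
    refine (DifferentiableAt.fun_sum fun j hj => ?_).neg
    refine (DifferentiableAt.abs (by fun_prop) ?_).const_mul _
    simpa using hl ⟨j, Finset.ne_of_mem_erase hj⟩
  have habs : DifferentiableAt ℝ (fun r : ℝ => α k * |r|) 0 := by
    refine hrest.congr_of_eventuallyEq (.of_forall fun r => ?_)
    have hr := congrFun hα (l + r • m)
    simp only [Finset.sum_apply, Pi.smul_apply, smul_eq_mul, Pi.zero_apply, add_apply,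
      smul_apply] at hr
    rw [← Finset.add_sum_erase _ _ (Finset.mem_univ k), hlk, hm, zero_add, mul_one] at hr
    exact eq_neg_of_add_eq_zero_left hr
  by_contra hαk
  refine not_differentiableAt_abs_zero ?_
  simpa [hαk] using habs.const_mul (α k)⁻¹

end AbsIndependence

section MergingParallelVectors

open scoped LinearAlgebra.Projectivization

variable {E : Type*} [AddCommGroup E] [Module ℝ E]

lemma exists_ne_zero_eq_smul_rep_mk {v : E} (hv : v ≠ 0) :
    ∃ c : ℝ, c ≠ 0 ∧ v = c • (Projectivization.mk ℝ v hv).rep := by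
  obtain ⟨c, hc⟩ := Projectivization.exists_smul_eq_mk_rep ℝ v hv
  exact ⟨(c⁻¹ : ℝˣ), Units.ne_zero _, (inv_smul_eq_iff.mpr hc.symm).symm⟩

lemma exists_pairwise_notMem_span_and_sum_abs_eq {ι : Type*} [Fintype ι] {b : ι → E}
    (hb : ∀ i, b i ≠ 0) :
    ∃ (n : ℕ) (a : Fin n → E), (∀ k, a k ≠ 0) ∧
      (Pairwise fun k m => a m ∉ Submodule.span ℝ {a k}) ∧
      ∀ l : E →ₗ[ℝ] ℝ, ∑ k, |l (a k)| = ∑ i, |l (b i)| := by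
  classical
  let line : ι → ℙ ℝ E := fun i => .mk ℝ (b i) (hb i)
  let T := Finset.univ.image line
  choose c hc0 hc using fun i => exists_ne_zero_eq_smul_rep_mk (hb i)
  let r : ℙ ℝ E → ℝ := fun p => ∑ i with line i = p, |c i|
  have hr : ∀ p ∈ T, r p ≠ 0 := fun p hp => by
    obtain ⟨i, -, rfl⟩ := Finset.mem_image.mp hp
    exact (Finset.sum_pos (fun j _ => abs_pos.mpr (hc0 j)) ⟨i, by simp⟩).ne'
  let a : T → E := fun p => r p • p.1.rep
  have ha0 : ∀ p, a p ≠ 0 := fun p => smul_ne_zero (hr p p.2) p.1.rep_nonzero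
  have hline : ∀ p, Projectivization.mk ℝ (a p) (ha0 p) = p := fun p =>
    ((Projectivization.mk_eq_mk_iff' ℝ _ _ _ p.1.rep_nonzero).mpr ⟨r p, rfl⟩).trans p.1.mk_rep
  have hind : Pairwise fun p q => a q ∉ Submodule.span ℝ {a p} := fun p q hpq hmem => by
    refine hpq (Subtype.ext ?_)
    rw [← hline p, ← hline q, eq_comm]
    exact (Projectivization.mk_eq_mk_iff' ℝ _ _ _ _).mpr (Submodule.mem_span_singleton.mp hmem)
  have hsum : ∀ l : E →ₗ[ℝ] ℝ, ∑ p, |l (a p)| = ∑ i, |l (b i)| := fun l => by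
    rw [Finset.sum_coe_sort T fun p => |l (r p • p.rep)|,
      ← Finset.sum_fiberwise_of_maps_to fun i _ => Finset.mem_image_of_mem line (Finset.mem_univ i)]
    refine Finset.sum_congr rfl fun p _ => ?_
    rw [map_smul, smul_eq_mul, abs_mul, Finset.abs_sum_of_nonneg fun i _ => abs_nonneg (c i),
      Finset.sum_mul]
    refine Finset.sum_congr rfl fun i hi => ?_
    calc |c i| * |l p.rep| = |l (c i • (line i).rep)| := by
          rw [(Finset.mem_filter.mp hi).2, map_smul, smul_eq_mul, abs_mul]
      _ = |l (b i)| := by rw [← hc i]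
  refine ⟨T.card, a ∘ T.equivFin.symm, fun k => ha0 _,
    hind.comp_of_injective T.equivFin.symm.injective, fun l => ?_⟩
  rw [← hsum l, ← T.equivFin.symm.sum_comp]
  rfl

end MergingParallelVectors

section SymmetricBodies

variable {E : Type*} [AddCommGroup E] [Module ℝ E] [TopologicalSpace E] {A B : Set E} {c : E}

lemma two_mul_sSup_image_of_singleton_sub_eq (hA : IsCompact A) (hne : A.Nonempty)
    (hsym : {c} - A = A) (l : E →L[ℝ] ℝ) : 2 * sSup (l '' A) = l c + width l A := by
  have hc := hA.image l.continuous
  have hsup : sSup (l '' A) = l c - sInf (l '' A) := by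
    conv_lhs => rw [← hsym, image_sub, image_singleton]
    rw [csSup_sub (singleton_nonempty _) bddAbove_singleton (hne.image l) hc.bddBelow,
      csSup_singleton]
  rw [width]
  linarith

variable [IsTopologicalAddGroup E] [ContinuousSMul ℝ E] [LocallyConvexSpace ℝ E]

lemma subset_of_forall_sSup_image_le (hA : IsCompact A) (hB : Convex ℝ B) (hBc : IsClosed B)
    (hBne : B.Nonempty) (h : ∀ l : E →L[ℝ] ℝ, sSup (l '' A) ≤ sSup (l '' B)) : A ⊆ B := by
  intro x hx
  by_contra hxB
  obtain ⟨l, r, hl, hr⟩ := geometric_hahn_banach_closed_point hB hBc hxB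
  have hBr : sSup (l '' B) ≤ r :=
    csSup_le (hBne.image l) (forall_mem_image.mpr fun y hy => (hl y hy).le)
  have hAx : l x ≤ sSup (l '' A) :=
    le_csSup (hA.image l.continuous).bddAbove (mem_image_of_mem l hx)
  linarith [h l]

lemma eq_of_singleton_sub_eq_of_width_eq [T2Space E] (hA : IsCompact A) (hB : IsCompact B)
    (hAconv : Convex ℝ A) (hBconv : Convex ℝ B) (hAne : A.Nonempty) (hBne : B.Nonempty)
    (hAsym : {c} - A = A) (hBsym : {c} - B = B) (h : ∀ l : E →L[ℝ] ℝ, width l A = width l B) :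
    A = B := by
  have hsup : ∀ l : E →L[ℝ] ℝ, sSup (l '' A) = sSup (l '' B) := fun l => by
    have hA2 := two_mul_sSup_image_of_singleton_sub_eq hA hAne hAsym l
    have hB2 := two_mul_sSup_image_of_singleton_sub_eq hB hBne hBsym l
    linarith [h l]
  exact (subset_of_forall_sSup_image_le hA hBconv hB.isClosed hBne fun l => (hsup l).le).antisymm
    (subset_of_forall_sSup_image_le hB hAconv hA.isClosed hAne fun l => (hsup l).ge)

lemma exists_eq_zonotope_of_width_eq [T2Space E] {ι : Type*} [Fintype ι] {a : ι → E}
    (hA : IsCompact A) (hAconv : Convex ℝ A) (hAne : A.Nonempty) (hAsym : {c} - A = A)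
    (h : ∀ l : E →L[ℝ] ℝ, width l A = ∑ i, |l (a i)|) : ∃ x, A = zonotope x a := by
  obtain ⟨x, rfl⟩ : ∃ x, x + x + ∑ i, a i = c := ⟨(2⁻¹ : ℝ) • (c - ∑ i, a i), by module⟩
  refine ⟨x, ?_⟩
  exact eq_of_singleton_sub_eq_of_width_eq hA (isCompact_zonotope x a) hAconv (convex_zonotope x a)
    hAne (nonempty_zonotope x a) hAsym (singleton_sub_zonotope x a)
    fun l => (h l).trans (width_zonotope l x a).symm

end SymmetricBodies

section Characterization

variable {E : Type*} [AddCommGroup E] [Module ℝ E] [TopologicalSpace E] {s : Set E} {c : E}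
  {lam : ℝ}

lemma exists_sum_abs_eq_mul_finsum_width_edges (hs : s.Finite) {r : ℝ} (hr : 0 < r) :
    ∃ (n : ℕ) (a : Fin n → E), (∀ i, a i ≠ 0) ∧
      (Pairwise fun i j => a j ∉ Submodule.span ℝ {a i}) ∧
      ∀ l : E →L[ℝ] ℝ, ∑ i, |l (a i)| = r * ∑ᶠ e ∈ edges (convexHull ℝ s), width l e := by
  choose u w huw he using fun e : edges (convexHull ℝ s) => e.2.2
  have := (finite_edges_convexHull hs).fintype
  obtain ⟨n, a, h0, hind, ha⟩ := exists_pairwise_notMem_span_and_sum_abs_eq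
    (b := fun e => r • (w e - u e)) fun e => smul_ne_zero hr.ne' (sub_ne_zero.mpr (huw e).symm)
  refine ⟨n, a, h0, hind, fun l => (ha l).trans ?_⟩
  rw [← finsum_set_coe_eq_finsum_mem, finsum_eq_sum_of_fintype, Finset.mul_sum]
  refine Finset.sum_congr rfl fun e _ => ?_
  rw [he e, width_segment, map_smul, smul_eq_mul, abs_mul, abs_of_pos hr]
  rfl

variable [IsTopologicalAddGroup E] [ContinuousSMul ℝ E] [T2Space E] [LocallyConvexSpace ℝ E]

lemma pos_of_forall_mul_width_eq_finsum (hs : s.Finite)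
    (hpos : ∃ l : E →L[ℝ] ℝ, 0 < width l (convexHull ℝ s))
    (hlam : ∀ l : E →L[ℝ] ℝ,
      lam * width l (convexHull ℝ s) = ∑ᶠ e ∈ edges (convexHull ℝ s), width l e) : 0 < lam := by
  obtain ⟨l, hl⟩ := hpos
  refine pos_of_mul_pos_left ?_ hl.le
  obtain ⟨e, he, hle⟩ := exists_mem_edges_width_pos hs hl
  have hfin := finite_edges_convexHull hs
  rw [hlam l, finsum_mem_eq_finite_toFinset_sum _ hfin]
  refine Finset.sum_pos' (fun e' he' => ?_) ⟨e, hfin.mem_toFinset.mpr he, hle⟩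
  have hexp := (hfin.mem_toFinset.mp he').1
  exact width_nonneg (hexp.isCompact (hs.isCompact_convexHull ℝ)) l

lemma exists_eq_zonotope_of_forall_mul_width_eq_finsum (hs : s.Finite)
    (hsym : {c} - convexHull ℝ s = convexHull ℝ s)
    (hpos : ∃ l : E →L[ℝ] ℝ, 0 < width l (convexHull ℝ s))
    (hlam : ∀ l : E →L[ℝ] ℝ,
      lam * width l (convexHull ℝ s) = ∑ᶠ e ∈ edges (convexHull ℝ s), width l e) :
    ∃ (n : ℕ) (a : Fin n → E) (x : E), (∀ i, a i ≠ 0) ∧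
      (Pairwise fun i j => a j ∉ Submodule.span ℝ {a i}) ∧ convexHull ℝ s = zonotope x a := by
  have hlam0 : 0 < lam := pos_of_forall_mul_width_eq_finsum hs hpos hlam
  have hne : (convexHull ℝ s).Nonempty := by
    by_contra hempty
    simp [width, not_nonempty_iff_eq_empty.mp hempty] at hpos
  obtain ⟨n, a, h0, hind, ha⟩ :=
    exists_sum_abs_eq_mul_finsum_width_edges hs (inv_pos.mpr hlam0)
  obtain ⟨x, hx⟩ := exists_eq_zonotope_of_width_eq (hs.isCompact_convexHull ℝ)
    (convex_convexHull ℝ s) hne hsym fun l => by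
      rw [ha l, ← hlam l, inv_mul_cancel_left₀ hlam0.ne']
  exact ⟨n, a, x, h0, hind, hx⟩

lemma forall_mul_width_zonotope_eq_finsum_iff {ι : Type*} [Fintype ι] {x : E} {a : ι → E}
    (h0 : ∀ i, a i ≠ 0) (hind : Pairwise fun i j => a j ∉ Submodule.span ℝ {a i}) :
    (∀ l : E →L[ℝ] ℝ,
        lam * width l (zonotope x a) = ∑ᶠ e ∈ edges (zonotope x a), width l e) ↔
      ∀ i, ((parallelEdges (zonotope x a) (a i)).ncard : ℝ) = lam := by
  simp only [width_zonotope, finsum_width_edges_zonotope h0 hind]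
  constructor
  · intro h i
    refine sub_eq_zero.mp <| Fintype.linearIndependent_iff.mp (linearIndependent_abs_apply h0 hind)
      (fun i => ((parallelEdges (zonotope x a) (a i)).ncard : ℝ) - lam) (funext fun l => ?_) i
    simp only [Finset.sum_apply, Pi.smul_apply, smul_eq_mul, Pi.zero_apply, sub_mul,
      Finset.sum_sub_distrib, ← Finset.mul_sum, h l, sub_self]
  · intro h l
    simp only [h, Finset.mul_sum]

theorem forall_mul_width_eq_finsum_iff_exists_eq_zonotope (hs : s.Finite)
    (hsym : {c} - convexHull ℝ s = convexHull ℝ s)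
    (hpos : ∃ l : E →L[ℝ] ℝ, 0 < width l (convexHull ℝ s)) :
    (∀ l : E →L[ℝ] ℝ,
        lam * width l (convexHull ℝ s) = ∑ᶠ e ∈ edges (convexHull ℝ s), width l e) ↔
      ∃ (n : ℕ) (a : Fin n → E) (x : E), (∀ i, a i ≠ 0) ∧
        (Pairwise fun i j => a j ∉ Submodule.span ℝ {a i}) ∧ convexHull ℝ s = zonotope x a ∧
        ∀ i, ((parallelEdges (convexHull ℝ s) (a i)).ncard : ℝ) = lam := by
  constructor
  · intro h
    obtain ⟨n, a, x, h0, hind, hx⟩ :=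
      exists_eq_zonotope_of_forall_mul_width_eq_finsum hs hsym hpos h
    refine ⟨n, a, x, h0, hind, hx, ?_⟩
    rw [hx] at h ⊢
    exact (forall_mul_width_zonotope_eq_finsum_iff h0 hind).mp h
  · rintro ⟨n, a, x, h0, hind, hx, hcard⟩
    rw [hx] at hcard ⊢
    exact (forall_mul_width_zonotope_eq_finsum_iff h0 hind).mpr hcard

end Characterization

section FullDimensional

lemma finrank_le_one_of_nonempty_interior_segment {E : Type*} [NormedAddCommGroup E]
    [NormedSpace ℝ E] {u w : E} (h : (interior (segment ℝ u w)).Nonempty) :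
    Module.finrank ℝ E ≤ 1 := by
  rw [← convexHull_pair] at h
  rw [← finrank_top ℝ E, ← AffineSubspace.vectorSpan_eq_top_of_affineSpan_eq_top ℝ E E
    (affineSpan_eq_top_of_nonempty_interior h)]
  exact collinear_iff_finrank_le_one.mp (collinear_pair ℝ u w)

lemma width_pos_of_nonempty_interior {E : Type*} [AddCommGroup E] [Module ℝ E]
    [TopologicalSpace E] [ContinuousAdd E] [ContinuousSMul ℝ E] {P : Set E} {l : E →L[ℝ] ℝ}
    (hP : IsCompact P) (hint : (interior P).Nonempty) (hl : l ≠ 0) : 0 < width l P := by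
  obtain ⟨x, hx⟩ := hint
  obtain ⟨v, hv : l v ≠ 0⟩ := DFunLike.ne_iff.mp hl
  have hline : Tendsto (fun r : ℝ => x + r • v) (𝓝 0) (𝓝 x) :=
    (by fun_prop : Continuous fun r : ℝ => x + r • v).tendsto' 0 x (by simp)
  obtain ⟨r, hr, hrP⟩ := (hline.eventually (mem_interior_iff_mem_nhds.mp hx)).exists_gt
  calc 0 < |l (x + r • v) - l x| := by simp [hr.ne', hv]
    _ ≤ width l P := abs_sub_le_width hP hrP (interior_subset hx) l

lemma exists_width_pos_of_nonempty_interior {E : Type*} [AddCommGroup E] [Module ℝ E]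
    [TopologicalSpace E] [ContinuousAdd E] [ContinuousSMul ℝ E] [SeparatingDual ℝ E]
    [Nontrivial E] {P : Set E} (hP : IsCompact P) (hint : (interior P).Nonempty) :
    ∃ l : E →L[ℝ] ℝ, 0 < width l P := by
  obtain ⟨v, hv⟩ := exists_ne (0 : E)
  obtain ⟨l, hl⟩ := SeparatingDual.exists_ne_zero (R := ℝ) hv
  exact ⟨l, width_pos_of_nonempty_interior hP hint fun h => hl (by rw [h, zero_apply])⟩

end FullDimensional

section CoordinateSpace

variable {d : ℕ} {P : Set (Fin d → ℝ)} {z : Fin d → ℝ} {lam : ℝ}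

/-- The identification of `ℝ^d` with its dual space given by the scalar product. -/
def dotFunctional (d : ℕ) : (Fin d → ℝ) ≃ₗ[ℝ] ((Fin d → ℝ) →L[ℝ] ℝ) :=
  (dotProductEquiv ℝ (Fin d)).trans LinearMap.toContinuousLinearMap

lemma IsPolytope.isCompact (hP : IsPolytope P) : IsCompact P := by
  obtain ⟨s, rfl⟩ := hP
  exact s.finite_toSet.isCompact_convexHull ℝ

lemma IsPolytope.avgVert_eq_iff (hP : IsPolytope P) (hint : (interior P).Nonempty) (hz : z ≠ 0) :
    avgVert P z = lam ↔
      lam * width (dotFunctional d z) P = ∑ᶠ e ∈ edges P, width (dotFunctional d z) e := by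
  have hpos : 0 < width (dotFunctional d z) P :=
    width_pos_of_nonempty_interior hP.isCompact hint ((dotFunctional d).map_ne_zero_iff.mpr hz)
  obtain ⟨s, rfl⟩ := hP
  rw [← intervalIntegral_ncard_extremePoints_section s.finite_toSet, eq_comm, mul_comm,
    ← eq_inv_mul_iff_mul_eq₀ hpos.ne']
  rfl

lemma IsPolytope.forall_avgVert_eq_iff (hP : IsPolytope P) (hint : (interior P).Nonempty) :
    (∀ z, z ≠ 0 → avgVert P z = lam) ↔
      ∀ l : (Fin d → ℝ) →L[ℝ] ℝ, lam * width l P = ∑ᶠ e ∈ edges P, width l e := by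
  refine ⟨fun h l => ?_, fun h z hz => (hP.avgVert_eq_iff hint hz).mpr (h _)⟩
  obtain ⟨z, rfl⟩ := (dotFunctional d).surjective l
  rcases eq_or_ne z 0 with rfl | hz
  · have hzero : ∀ e : Set (Fin d → ℝ), width (dotFunctional d 0) e = 0 := fun e => by
      rw [map_zero, width_zero]
    simp only [hzero, mul_zero, finsum_zero]
  · exact (hP.avgVert_eq_iff hint hz).mp (h z hz)

lemma pairwiseIndep_iff {n : ℕ} {a : Fin n → Fin d → ℝ} :
    PairwiseIndep a ↔
      (∀ i, a i ≠ 0) ∧ Pairwise fun i j => a j ∉ Submodule.span ℝ {a i} := by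
  simp only [PairwiseIndep, Pairwise, Submodule.mem_span_singleton, not_exists, ne_comm, ne_eq]

lemma CentSymm.exists_singleton_sub_eq (h : CentSymm P) : ∃ c, {c} - P = P := by
  obtain ⟨c, hc⟩ := h
  exact ⟨(2 : ℝ) • c, singleton_sub.trans hc⟩

lemma edgesParallel_eq_parallelEdges (hd : 2 ≤ d) (hint : (interior P).Nonempty) (v : Fin d → ℝ) :
    edgesParallel P v = parallelEdges P v := by
  ext e
  constructor
  · rintro ⟨u, w, huw, rfl, ⟨y, -, he⟩, c, -, hc⟩
    exact ⟨⟨fun _ => ⟨dotFunctional d y, he⟩, u, w, huw, rfl⟩, u, w, rfl,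
      Submodule.mem_span_singleton.mpr ⟨c, hc.symm⟩⟩
  · rintro ⟨⟨hexp, u, w, huw, rfl⟩, u', w', he, hspan⟩
    obtain ⟨c, hc⟩ := Submodule.mem_span_singleton.mp hspan
    have huw' : u' ≠ w' := by
      rintro rfl
      rw [segment_same] at he
      exact huw ((he ▸ left_mem_segment ℝ u w : u ∈ ({u'} : Set _)).trans
        (he ▸ right_mem_segment ℝ u w : w ∈ ({u'} : Set _)).symm)
    have hc0 : c ≠ 0 := by
      rintro rfl
      rw [zero_smul, eq_comm, sub_eq_zero] at hc
      exact huw' hc.symm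
    obtain ⟨l, hl⟩ := hexp ⟨u, left_mem_segment ℝ u w⟩
    obtain ⟨y, rfl⟩ := (dotFunctional d).surjective l
    refine ⟨u', w', huw', he, ⟨y, ?_, hl⟩, c, hc0, hc.symm⟩
    rintro rfl
    have hP : P = segment ℝ u w := by simpa using hl.symm
    have hdim := finrank_le_one_of_nonempty_interior_segment (hP ▸ hint)
    rw [Module.finrank_fin_fun] at hdim
    omega

end CoordinateSpace

theorem centSymm_avgVert_const_iff_dim_general (d : ℕ) (hd : 2 ≤ d) (P : Set (Fin d → ℝ))
    (hP : IsPolytope P) (hint : (interior P).Nonempty) (hsym : CentSymm P) (lam : ℝ) :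
    (∀ z : Fin d → ℝ, z ≠ 0 → avgVert P z = lam) ↔
      ∃ (n : ℕ) (a : Fin n → (Fin d → ℝ)) (x : Fin d → ℝ),
        PairwiseIndep a ∧
        P = {x} + ∑ i, segment ℝ 0 (a i) ∧
        ∀ i : Fin n, ((edgesParallel P (a i)).ncard : ℝ) = lam := by
  rw [hP.forall_avgVert_eq_iff hint]
  simp only [edgesParallel_eq_parallelEdges hd hint, pairwiseIndep_iff, and_assoc]
  have : Nonempty (Fin d) := ⟨⟨0, by lia⟩⟩
  have hpos := exists_width_pos_of_nonempty_interior hP.isCompact hint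
  obtain ⟨c, hc⟩ := hsym.exists_singleton_sub_eq
  obtain ⟨s, rfl⟩ := hP
  exact forall_mul_width_eq_finsum_iff_exists_eq_zonotope s.finite_toSet hc hpos

/-- For a centrally symmetric convex polytope `P ⊂ ℝ^d` (`d ≥ 3`) with
nonempty interior, `A(P,z) = λ` for every nonzero `z` iff `P` is a zonotope with a
generator set such that, for every generator `v`, the number of edges of `P` parallel
to `v` equals `λ`. -/
theorem centSymm_avgVert_const_iff_dim (d : ℕ) (hd : 3 ≤ d) (P : Set (Fin d → ℝ))
    (hP : IsPolytope P) (hint : (interior P).Nonempty) (hsym : CentSymm P) (lam : ℝ) :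
    (∀ z : Fin d → ℝ, z ≠ 0 → avgVert P z = lam) ↔
      ∃ (n : ℕ) (a : Fin n → (Fin d → ℝ)) (x : Fin d → ℝ),
        PairwiseIndep a ∧
        P = {x} + ∑ i, segment ℝ 0 (a i) ∧
        ∀ i : Fin n, ((edgesParallel P (a i)).ncard : ℝ) = lam :=
  centSymm_avgVert_const_iff_dim_general d (by lia) P hP hint hsym lam
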